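/- Let P be a finite planar point set in general position satisfying Property Δ_k, and let m : P → m(P) be a move taking an internal point z across a line ℓ of the arrangement 𝒜^z such that at least one endpoint of ℓ is an internal point of P. Then m(P) also satisfies Property Δ_k. -/

import Mathlib

open scoped Classical

noncomputable section

/-- No three distinct points of `P` are collinear. -/
def GenPos (P : Finset ℂ) : Prop :=
  ∀ x ∈ P, ∀ y ∈ P, ∀ z ∈ P, x ≠ y → x ≠ z → y ≠ z → ¬ Collinear ℝ ({x, y, z} : Set ℂ)

/-- `A` is a convex subset of `P`: `A ⊆ P` and no point of `A` lies in the interior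
of the convex hull of `A`. -/
def ConvexSubset (P A : Finset ℂ) : Prop :=
  A ⊆ P ∧ ∀ a ∈ A, a ∉ interior (convexHull ℝ (A : Set ℂ))

/-- Points of `P` in the interior of the convex hull of `A`. -/
def intPts (P A : Finset ℂ) : Finset ℂ :=
  P.filter (fun x => x ∈ interior (convexHull ℝ (A : Set ℂ)))

/-- Property `Δ_k`: every convex subset `A ⊆ P` has at most `|A| + k - 3` points of `P`
in the interior of its convex hull. -/
def PropertyDelta (P : Finset ℂ) (k : ℕ) : Prop :=
  ∀ A : Finset ℂ, ConvexSubset P A →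
    ((intPts P A).card : ℤ) ≤ (A.card : ℤ) + (k : ℤ) - 3

/-- A point is internal for `P` if it lies in the interior of the convex hull of `P`. -/
def Internal (P : Finset ℂ) (x : ℂ) : Prop :=
  x ∈ interior (convexHull ℝ (P : Set ℂ))

/-- A point of `P` is extremal if it lies on the boundary of the convex hull of `P`. -/
def Extremal (P : Finset ℂ) (x : ℂ) : Prop :=
  x ∈ P ∧ ¬ Internal P x

/-- The line through two points, as a subset of the plane. -/
def lineThrough (u v : ℂ) : Set ℂ :=
  ↑(affineSpan ℝ ({u, v} : Set ℂ))

/-- Signed area test: the side of the line through `a, b` on which `x` lies. -/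
def cross2 (a b x : ℂ) : ℝ :=
  (b.re - a.re) * (x.im - a.im) - (b.im - a.im) * (x.re - a.re)

/-- The line through `w₁, w₂` is non-separating: all internal points of `P` lie
(weakly) on one side of it. -/
def NonSeparating (P : Finset ℂ) (w₁ w₂ : ℂ) : Prop :=
  (∀ x ∈ P, Internal P x → 0 ≤ cross2 w₁ w₂ x) ∨
  (∀ x ∈ P, Internal P x → cross2 w₁ w₂ x ≤ 0)

/-- A move of configurations: `z ∈ P` is replaced by a point `z'` lying in the interior of
a region of the complement of the arrangement `𝒜^z` (lines through pairs of points of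
`P - {z}`) adjacent to the region of `z`, the two regions being separated by the line `ℓ`
through `w₁, w₂ ∈ P`: the segment from `z` to `z'` crosses `ℓ` and no other line of `𝒜^z`. -/
def MoveAcross (P : Finset ℂ) (z z' w₁ w₂ : ℂ) : Prop :=
  z ∈ P ∧ w₁ ∈ P ∧ w₂ ∈ P ∧ w₁ ≠ w₂ ∧ z ≠ w₁ ∧ z ≠ w₂ ∧ z' ∉ P ∧
  z ∉ lineThrough w₁ w₂ ∧ z' ∉ lineThrough w₁ w₂ ∧
  (∃ p ∈ segment ℝ z z', p ∈ lineThrough w₁ w₂) ∧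
  (∀ u ∈ P, ∀ v ∈ P, u ≠ v → u ≠ z → v ≠ z → ({u, v} : Set ℂ) ≠ ({w₁, w₂} : Set ℂ) →
    ∀ p ∈ segment ℝ z z', p ∉ lineThrough u v)

/-- The configuration resulting from a move. -/
def movedConfig (P : Finset ℂ) (z z' : ℂ) : Finset ℂ :=
  insert z' (P.erase z)

/-- A `Δ_k`-move between configurations. -/
def DeltaMove (k : ℕ) (P Q : Finset ℂ) : Prop :=
  PropertyDelta P k ∧ PropertyDelta Q k ∧
  ∃ z z' w₁ w₂, MoveAcross P z z' w₁ w₂ ∧ Q = movedConfig P z z'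

/-- Every point of `P` lies on the boundary of the convex hull of `P`. -/
def ConvexPosition (P : Finset ℂ) : Prop :=
  ∀ x ∈ P, ¬ Internal P x

/-!
Call `A ⊆ P` tight if at least `|A| + k - 3` points of `P` are interior to its hull. If adding at
most two points of `P` to a tight set makes a point of the set interior, then `Δ_k` leaves no room
for any other new interior point. A Carathéodory argument with a fixed interior point shows that
every point interior to `conv P` can be swallowed, that is, made interior to the hull of a tight
set, by adding at most two points. As `z` moves, the number of interior points of a set can only
grow when `z` enters its hull through the edge `w₁w₂`, or when `z` is a vertex and `w₁` or `w₂`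
enters. If this violates `Δ_k`, the set was tight before the move. In the first case swallow `w₁`;
then the edge `w₁w₂` has an interior endpoint, so `z` was swallowed too. In the second case, with
`w₁` entering, swallow `z` without adding `w₁`; then nothing is crossed, so the point where `z`
passes behind `w₁` is swallowed and with it `w₁`. Both contradict tightness.
-/

section Topology

variable {X : Type*} [TopologicalSpace X]

theorem inter_frontier_nonempty_of_isPreconnected {s t : Set X} (hs : IsPreconnected s)
    (hst : (s ∩ t).Nonempty) (hst' : (s \ t).Nonempty) : (s ∩ frontier t).Nonempty := by
  by_contra hempty
  have hcover : s ⊆ interior t ∪ interior tᶜ := by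
    rw [← compl_frontier_eq_union_interior]
    exact fun x hxs hxt => hempty ⟨x, hxs, hxt⟩
  have hdisjoint : Disjoint (interior t) (interior tᶜ) :=
    disjoint_compl_right.mono interior_subset interior_subset
  obtain ⟨x, hxs, hxt⟩ := hst
  obtain ⟨y, hys, hyt⟩ := hst'
  have hxi : x ∈ interior t :=
    (hcover hxs).resolve_right fun hxi => interior_subset hxi hxt
  exact hyt (interior_subset (hs.subset_left_of_subset_union isOpen_interior isOpen_interior
    hdisjoint hcover ⟨x, hxs, hxi⟩ hys))

end Topology

section Convex

variable {E : Type*} [NormedAddCommGroup E] [NormedSpace ℝ E]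

theorem convexHull_sdiff_interior_convexHull [Nontrivial E] {s : Set E} (hs : s.Finite) :
    convexHull ℝ (s \ interior (convexHull ℝ s)) = convexHull ℝ s := by
  refine (convexHull_mono Set.sdiff_subset).antisymm ?_
  have hextreme : (convexHull ℝ s).extremePoints ℝ ⊆ s \ interior (convexHull ℝ s) := fun x hx =>
    ⟨extremePoints_convexHull_subset hx, fun hxi =>
      Set.disjoint_left.1 (disjoint_interior_extremePoints _) hxi hx⟩
  calc convexHull ℝ s
      = closure (convexHull ℝ ((convexHull ℝ s).extremePoints ℝ)) :=
        (closure_convexHull_extremePoints (hs.isCompact_convexHull ℝ) (convex_convexHull ℝ s)).symm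
    _ ⊆ closure (convexHull ℝ (s \ interior (convexHull ℝ s))) :=
        closure_mono (convexHull_mono hextreme)
    _ = convexHull ℝ (s \ interior (convexHull ℝ s)) :=
        ((hs.subset Set.sdiff_subset).isClosed_convexHull ℝ).closure_eq

theorem convexHull_sdiff_singleton_of_mem_interior [Nontrivial E] {s : Set E} (hs : s.Finite)
    {x : E} (hx : x ∈ interior (convexHull ℝ s)) : convexHull ℝ (s \ {x}) = convexHull ℝ s := by
  refine (convexHull_mono Set.sdiff_subset).antisymm ?_
  rw [← convexHull_sdiff_interior_convexHull hs]
  exact convexHull_mono (Set.sdiff_subset_sdiff_right (Set.singleton_subset_iff.2 hx))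

theorem exists_card_le_finrank_mem_convexHull_of_notMem_interior [FiniteDimensional ℝ E]
    {s : Set E} {x : E} (hx : x ∈ convexHull ℝ s) (hxi : x ∉ interior (convexHull ℝ s)) :
    ∃ t : Finset E, ↑t ⊆ s ∧ t.card ≤ Module.finrank ℝ E ∧ x ∈ convexHull ℝ (t : Set E) := by
  obtain ⟨ι, _, p, w, hps, hp, hw, hw1, rfl⟩ := eq_pos_convex_span_of_mem_convexHull hx
  refine ⟨Finset.univ.image p, by simpa using hps, ?_, ?_⟩
  · refine Finset.card_image_le.trans (Nat.le_of_lt_succ (lt_of_le_of_ne ?_ fun hcard => hxi ?_))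
    · exact hp.card_le_finrank_succ.trans (Nat.succ_le_succ (Submodule.finrank_le _))
    let b : AffineBasis ι ℝ E :=
      ⟨p, hp, hp.affineSpan_eq_top_iff_card_eq_finrank_add_one.2 hcard⟩
    refine interior_mono (convexHull_mono hps) (b.interior_convexHull.ge fun i => ?_)
    rw [← Finset.affineCombination_eq_linear_combination _ _ _ hw1]
    exact (b.coord_apply_combination_of_mem (Finset.mem_univ i) hw1).symm ▸ hw i
  · exact (convex_convexHull ℝ _).sum_mem (fun i _ => (hw i).le) hw1
      fun i _ => subset_convexHull ℝ _ (by simp)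

theorem exists_notMem_wbtw {s : Set E} (hs : Bornology.IsBounded s) {x y : E}
    (hxy : x ≠ y) : ∃ z ∉ s, Wbtw ℝ x y z := by
  obtain ⟨R, hR⟩ := (Metric.isBounded_iff_subset_closedBall x).1 hs
  obtain ⟨c, hcR, hc⟩ := ((Filter.tendsto_id.atTop_mul_const (dist_pos.2 hxy)).eventually_gt_atTop R
    |>.and (Filter.eventually_ge_atTop (1 : ℝ))).exists
  refine ⟨AffineMap.lineMap x y c, fun hz => ?_, ?_⟩
  · have hle := hR hz
    rw [Metric.mem_closedBall, dist_lineMap_left,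
      Real.norm_of_nonneg (zero_le_one.trans hc)] at hle
    exact hcR.not_ge hle
  · exact wbtw_iff_left_eq_or_right_mem_image_Ici.2 (Or.inr ⟨c, hc, rfl⟩)

/-- The ray from `q` through `y` leaves the hull of `s` at a boundary point, and a boundary point
needs only `finrank ℝ E` points in Carathéodory's theorem. -/
theorem exists_card_le_finrank_mem_interior_convexHull_union [FiniteDimensional ℝ E]
    {s a : Set E} (hs : s.Finite) {q y : E} (hq : q ∈ interior (convexHull ℝ a))
    (hy : y ∈ interior (convexHull ℝ s)) :
    ∃ t : Finset E, ↑t ⊆ s ∧ t.card ≤ Module.finrank ℝ E ∧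
      y ∈ interior (convexHull ℝ (a ∪ t)) := by
  rcases eq_or_ne q y with rfl | hqy
  · exact ⟨∅, by simp, by simp, by simpa using hq⟩
  obtain ⟨b, hbs, hyb⟩ := exists_notMem_wbtw (hs.isCompact_convexHull ℝ).isBounded hqy
  obtain ⟨r, hr, hrs⟩ := inter_frontier_nonempty_of_isPreconnected
    (convex_segment (𝕜 := ℝ) y b).isPreconnected
    ⟨y, left_mem_segment ℝ y b, interior_subset hy⟩ ⟨b, right_mem_segment ℝ y b, hbs⟩
  have hqyr : y ∈ segment ℝ q r :=
    mem_segment_iff_wbtw.2 (hyb.symm.trans_left_right (mem_segment_iff_wbtw.1 hr).symm).symm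
  obtain ⟨t, hts, hcard, hrt⟩ := exists_card_le_finrank_mem_convexHull_of_notMem_interior
    ((hs.isClosed_convexHull ℝ).frontier_subset hrs) hrs.2
  refine ⟨t, hts, hcard, ?_⟩
  have hry : r ≠ y := by rintro rfl; exact hrs.2 hy
  exact (convex_convexHull ℝ _).openSegment_interior_self_subset_interior
    (interior_mono (convexHull_mono Set.subset_union_left) hq)
    (convexHull_mono Set.subset_union_right hrt) (mem_openSegment_of_ne_left_right hqy hry hqyr)

theorem exists_mem_segment_of_notMem_interior_convexHull [FiniteDimensional ℝ E]
    (hE : Module.finrank ℝ E ≤ 2) {s : Set E} {x : E} (hx : x ∈ convexHull ℝ s)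
    (hxi : x ∉ interior (convexHull ℝ s)) : ∃ u ∈ s, ∃ v ∈ s, x ∈ segment ℝ u v := by
  obtain ⟨t, hts, hcard, hxt⟩ := exists_card_le_finrank_mem_convexHull_of_notMem_interior hx hxi
  have ht : t.Nonempty := by
    simpa using convexHull_nonempty_iff.1 ⟨x, hxt⟩
  obtain ⟨u, v, rfl⟩ : ∃ u v, t = {u, v} := by
    obtain hcard1 | hcard2 : t.card = 1 ∨ t.card = 2 := by
      have := ht.card_pos
      omega
    · obtain ⟨u, rfl⟩ := Finset.card_eq_one.1 hcard1
      exact ⟨u, u, by simp⟩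
    · obtain ⟨u, v, -, rfl⟩ := Finset.card_eq_two.1 hcard2
      exact ⟨u, v, rfl⟩
  rw [Finset.coe_pair] at hts hxt
  exact ⟨u, hts (by simp), v, hts (by simp), by rwa [convexHull_pair] at hxt⟩

section Apex

variable {s : Set E} {x : E}

theorem isClosed_setOf_mem_convexHull_insert (hs : s.Finite) (x : E) :
    IsClosed {w | x ∈ convexHull ℝ (insert w s)} := by
  rw [← isOpen_compl_iff, isOpen_iff_mem_nhds]
  intro w hw
  obtain ⟨f, c, hfc, hcx⟩ := geometric_hahn_banach_closed_point (convex_convexHull ℝ _)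
    ((hs.insert w).isClosed_convexHull ℝ) hw
  have hfw : f w < c := hfc w (subset_convexHull ℝ _ (Set.mem_insert w s))
  filter_upwards [f.continuous.continuousAt.eventually_lt continuousAt_const hfw] with w' hw' hx
  have hsub : convexHull ℝ (insert w' s) ⊆ {p | f p < c} :=
    convexHull_min (Set.insert_subset hw' fun p hp =>
      hfc p (subset_convexHull ℝ _ (Set.mem_insert_of_mem w hp)))
      (convex_halfSpace_lt f.toLinearMap.isLinear c)
  exact lt_asymm hcx (hsub hx)

theorem mem_convexHull_insert_of_add_sub_mem (hs : s.Finite) {w w' : E}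
    (hx : x ∈ convexHull ℝ (insert w s)) (hx' : x + (w - w') ∈ convexHull ℝ (insert w s)) :
    x ∈ convexHull ℝ (insert w' s) := by
  by_contra hxw'
  obtain ⟨f, c, hfc, hcx⟩ := geometric_hahn_banach_closed_point (convex_convexHull ℝ _)
    ((hs.insert w').isClosed_convexHull ℝ) hxw'
  have hfw' : f w' < c := hfc w' (subset_convexHull ℝ _ (Set.mem_insert w' s))
  have hsub : convexHull ℝ (insert w s) ⊆ {p | f p ≤ max c (f w)} :=
    convexHull_min (Set.insert_subset (le_max_right c (f w)) fun p hp =>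
      (hfc p (subset_convexHull ℝ _ (Set.mem_insert_of_mem w' hp))).le.trans (le_max_left _ _))
      (convex_halfSpace_le f.toLinearMap.isLinear _)
  have hfx : f x ≤ f w := (le_max_iff.1 (hsub hx)).resolve_left hcx.not_ge
  have hfx' : f x + (f w - f w') ≤ max c (f w) := by simpa using hsub hx'
  rw [max_eq_right (hcx.le.trans hfx)] at hfx'
  linarith

theorem mem_interior_setOf_mem_convexHull_insert (hs : s.Finite) {w : E}
    (hx : x ∈ interior (convexHull ℝ (insert w s))) :
    w ∈ interior {w | x ∈ convexHull ℝ (insert w s)} := by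
  have hcont : Filter.Tendsto (fun w' => x + (w - w')) (nhds w) (nhds x) := by
    simpa using (by fun_prop : Continuous fun w' => x + (w - w')).tendsto w
  rw [mem_interior_iff_mem_nhds]
  filter_upwards [hcont (mem_interior_iff_mem_nhds.1 hx)] with w' hw'
  exact mem_convexHull_insert_of_add_sub_mem hs (interior_subset hx) hw'

theorem exists_mem_segment_mem_convexHull_insert_notMem_interior (hs : s.Finite) {a b : E}
    (ha : x ∉ interior (convexHull ℝ (insert a s)))
    (hb : x ∈ interior (convexHull ℝ (insert b s))) :
    ∃ p ∈ segment ℝ a b, x ∈ convexHull ℝ (insert p s) ∧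
      x ∉ interior (convexHull ℝ (insert p s)) := by
  by_cases hax : x ∈ convexHull ℝ (insert a s)
  · exact ⟨a, left_mem_segment ℝ a b, hax, ha⟩
  have hbx : x ∈ convexHull ℝ (insert b s) := interior_subset hb
  obtain ⟨p, hp, hpf⟩ := inter_frontier_nonempty_of_isPreconnected
    (t := {w | x ∈ convexHull ℝ (insert w s)}) (convex_segment (𝕜 := ℝ) a b).isPreconnected
    ⟨b, right_mem_segment ℝ a b, hbx⟩ ⟨a, left_mem_segment ℝ a b, hax⟩
  exact ⟨p, hp, (isClosed_setOf_mem_convexHull_insert hs x).frontier_subset hpf,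
    fun hxp => hpf.2 (mem_interior_setOf_mem_convexHull_insert hs hxp)⟩

end Apex

end Convex

section Planar

variable {P A B S : Finset ℂ} {k : ℕ} {q x y z z' w₁ w₂ : ℂ}

theorem Internal.mono (hAB : A ⊆ B) (hx : Internal A x) : Internal B x :=
  interior_mono (convexHull_mono (Finset.coe_subset.2 hAB)) hx

theorem internal_erase_iff (hx : Internal P x) : Internal (P.erase x) y ↔ Internal P y := by
  rw [Internal, Internal, Finset.coe_erase,
    convexHull_sdiff_singleton_of_mem_interior P.finite_toSet hx]

theorem Internal.exists_card_le_two_union (hq : Internal A q) (hy : Internal S y) :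
    ∃ t ⊆ S, t.card ≤ 2 ∧ Internal (A ∪ t) y := by
  obtain ⟨t, hts, hcard, hyt⟩ :=
    exists_card_le_finrank_mem_interior_convexHull_union S.finite_toSet hq hy
  exact ⟨t, Finset.coe_subset.1 hts, Complex.finrank_real_complex ▸ hcard,
    by rwa [Internal, Finset.coe_union]⟩

theorem mem_intPts : x ∈ intPts P A ↔ x ∈ P ∧ Internal A x :=
  Finset.mem_filter

theorem PropertyDelta.card_intPts_add_card_intPts_self_le (hΔ : PropertyDelta P k) (hA : A ⊆ P) :
    ((intPts P A).card : ℤ) + (intPts A A).card ≤ A.card + k - 3 := by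
  set B := A.filter fun x => ¬ Internal A x with hB
  have hull_eq : convexHull ℝ (B : Set ℂ) = convexHull ℝ (A : Set ℂ) := by
    rw [← convexHull_sdiff_interior_convexHull A.finite_toSet, hB, Finset.coe_filter]
    rfl
  have hconvex : ConvexSubset P B := by
    refine ⟨(Finset.filter_subset _ _).trans hA, fun a ha => ?_⟩
    rw [hull_eq]
    exact (Finset.mem_filter.1 ha).2
  have hbound : ((intPts P A).card : ℤ) ≤ B.card + k - 3 := by
    simpa only [intPts, hull_eq] using hΔ B hconvex
  have hcard : (intPts A A).card + B.card = A.card :=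
    Finset.card_filter_add_card_filter_not (Internal A)
  omega

/-- The subset `A` of `P` attains (or exceeds) the bound of Property `Δ_k`. Convexity of `A` is not
part of the definition: it follows from Property `Δ_k`. -/
def IsTight (P : Finset ℂ) (k : ℕ) (A : Finset ℂ) : Prop :=
  A ⊆ P ∧ (A.card : ℤ) + k - 3 ≤ (intPts P A).card

namespace IsTight

theorem not_internal (hA : IsTight P k A) (hΔ : PropertyDelta P k) (hx : x ∈ A) :
    ¬ Internal A x := fun hxA => by
  have hbound := hΔ.card_intPts_add_card_intPts_self_le hA.1
  have hpos : 0 < (intPts A A).card := Finset.card_pos.2 ⟨x, mem_intPts.2 ⟨hx, hxA⟩⟩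
  have := hA.2
  omega

theorem exists_internal (hA : IsTight P k A) (hΔ : PropertyDelta P k) (hne : A.Nonempty) :
    ∃ q, Internal A q := by
  have hk : (0 : ℤ) ≤ k - 3 := by
    simpa [intPts] using hΔ ∅ ⟨Finset.empty_subset P, by simp⟩
  have hpos : 0 < (intPts P A).card := by
    have := hne.card_pos
    have := hA.2
    omega
  obtain ⟨q, hq⟩ := Finset.card_pos.1 hpos
  exact ⟨q, (mem_intPts.1 hq).2⟩

theorem internal_of_internal_union (hA : IsTight P k A) (hΔ : PropertyDelta P k) {t : Finset ℂ}
    (ht : t ⊆ P) (hcard : t.card ≤ 2) (hx : x ∈ A) (hxt : Internal (A ∪ t) x)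
    (hy : y ∈ P) (hxy : x ≠ y) (hyt : Internal (A ∪ t) y) : Internal A y := by
  by_contra hyA
  have hbound := hΔ.card_intPts_add_card_intPts_self_le (Finset.union_subset hA.1 ht)
  have hcard_union : (A ∪ t).card ≤ A.card + 2 :=
    (Finset.card_union_le A t).trans (Nat.add_le_add_left hcard _)
  have hself : 0 < (intPts (A ∪ t) (A ∪ t)).card :=
    Finset.card_pos.2 ⟨x, mem_intPts.2 ⟨Finset.mem_union_left t hx, hxt⟩⟩
  have hsub : insert x (insert y (intPts P A)) ⊆ intPts P (A ∪ t) := by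
    refine Finset.insert_subset (mem_intPts.2 ⟨hA.1 hx, hxt⟩)
      (Finset.insert_subset (mem_intPts.2 ⟨hy, hyt⟩) fun p hp => ?_)
    obtain ⟨hpP, hpA⟩ := mem_intPts.1 hp
    exact mem_intPts.2 ⟨hpP, hpA.mono Finset.subset_union_left⟩
  have hcard_insert : (insert x (insert y (intPts P A))).card = (intPts P A).card + 2 := by
    rw [Finset.card_insert_of_notMem, Finset.card_insert_of_notMem]
    · exact fun h => hyA (mem_intPts.1 h).2
    · simp only [Finset.mem_insert, mem_intPts, not_or, not_and]
      exact ⟨hxy, fun _ => hA.not_internal hΔ hx⟩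
  have hgrow := Finset.card_le_card hsub
  have := hA.2
  omega

end IsTight

namespace MoveAcross

theorem mem (h : MoveAcross P z z' w₁ w₂) : z ∈ P :=
  h.1

theorem left_mem (h : MoveAcross P z z' w₁ w₂) : w₁ ∈ P :=
  h.2.1

theorem ne_left (h : MoveAcross P z z' w₁ w₂) : z ≠ w₁ :=
  h.2.2.2.2.1

theorem notMem_lineThrough (h : MoveAcross P z z' w₁ w₂) : z ∉ lineThrough w₁ w₂ :=
  h.2.2.2.2.2.2.2.1

theorem symm (h : MoveAcross P z z' w₁ w₂) : MoveAcross P z z' w₂ w₁ := by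
  obtain ⟨hz, hw₁, hw₂, hw, hzw₁, hzw₂, hz', hzl, hzl', hcross, havoid⟩ := h
  have hline : lineThrough w₂ w₁ = lineThrough w₁ w₂ := by
    rw [lineThrough, lineThrough, Set.pair_comm]
  exact ⟨hz, hw₂, hw₁, hw.symm, hzw₂, hzw₁, hz', hline ▸ hzl, hline ▸ hzl', hline ▸ hcross,
    Set.pair_comm w₂ w₁ ▸ havoid⟩

theorem pair_eq_of_mem_lineThrough (h : MoveAcross P z z' w₁ w₂) {u v p : ℂ}
    (hu : u ∈ P.erase z) (hv : v ∈ P.erase z) (huv : u ≠ v) (hp : p ∈ segment ℝ z z')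
    (hpuv : p ∈ lineThrough u v) : ({u, v} : Set ℂ) = {w₁, w₂} := by
  obtain ⟨-, -, -, -, -, -, -, -, -, -, havoid⟩ := h
  rw [Finset.mem_erase] at hu hv
  by_contra hne
  exact havoid u hu.2 v hv.2 huv hu.1 hv.1 hne p hp hpuv

theorem notMem_erase_of_mem_segment (h : MoveAcross P z z' w₁ w₂) (hz : Internal P z) {p : ℂ}
    (hp : p ∈ segment ℝ z z') : p ∉ P.erase z := by
  intro hpP
  have hw₁ : w₁ ∈ P.erase z := Finset.mem_erase.2 ⟨h.ne_left.symm, h.left_mem⟩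
  obtain ⟨a, ha, haw⟩ : ∃ a ∈ P.erase z, a ∉ ({w₁, w₂} : Set ℂ) := by
    by_contra! hall
    have hzw : z ∈ convexHull ℝ ({w₁, w₂} : Set ℂ) :=
      convexHull_mono hall (interior_subset ((internal_erase_iff hz).2 hz))
    exact h.notMem_lineThrough (convexHull_subset_affineSpan _ hzw)
  have haw₁ : a ≠ w₁ := by
    rintro rfl
    exact haw (Set.mem_insert a _)
  have hpa : p = a := by
    by_contra hpa
    refine haw (h.pair_eq_of_mem_lineThrough hpP ha hpa hp (left_mem_affineSpan_pair ℝ p a) ▸ ?_)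
    exact Set.mem_insert_of_mem p (Set.mem_singleton a)
  subst hpa
  refine haw (h.pair_eq_of_mem_lineThrough ha hw₁ haw₁ hp (left_mem_affineSpan_pair ℝ p w₁) ▸ ?_)
  exact Set.mem_insert p _

theorem internal_of_internal_of_mem_segment (h : MoveAcross P z z' w₁ w₂) (hz : Internal P z)
    (hS : S ⊆ P.erase z) (hw : w₁ ∈ S → Internal S w₁) {a b : ℂ}
    (ha : a ∈ segment ℝ z z') (hb : b ∈ segment ℝ z z') (haS : Internal S a) : Internal S b := by
  by_contra hbS
  obtain ⟨p, hpab, hpf⟩ := inter_frontier_nonempty_of_isPreconnected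
    (t := interior (convexHull ℝ (S : Set ℂ))) (convex_segment (𝕜 := ℝ) a b).isPreconnected
    ⟨a, left_mem_segment ℝ a b, haS⟩ ⟨b, right_mem_segment ℝ a b, hbS⟩
  have hp : p ∈ segment ℝ z z' := (convex_segment z z').segment_subset ha hb hpab
  have hpS : p ∉ P.erase z := h.notMem_erase_of_mem_segment hz hp
  replace hpf := frontier_interior_subset hpf
  obtain ⟨u, hu, v, hv, hpuv⟩ := exists_mem_segment_of_notMem_interior_convexHull
    Complex.finrank_real_complex.le ((S.finite_toSet.isClosed_convexHull ℝ).frontier_subset hpf)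
    hpf.2
  have hpu : u ≠ p := fun e => hpS (e ▸ hS hu)
  have hpv : v ≠ p := fun e => hpS (e ▸ hS hv)
  have huv : u ≠ v := by
    rintro rfl
    obtain rfl : p = u := by simpa using hpuv
    exact hpu rfl
  have hpair := h.pair_eq_of_mem_lineThrough (hS hu) (hS hv) huv hp
    (mem_segment_iff_wbtw.1 hpuv).mem_affineSpan
  have hopen : p ∈ openSegment ℝ w₁ w₂ ∧ w₁ ∈ S ∧ w₂ ∈ S := by
    have hpo := mem_openSegment_of_ne_left_right hpu hpv hpuv
    rcases Set.pair_eq_pair_iff.1 hpair with ⟨rfl, rfl⟩ | ⟨rfl, rfl⟩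
    · exact ⟨hpo, hu, hv⟩
    · exact ⟨openSegment_symm ℝ u v ▸ hpo, hv, hu⟩
  exact hpf.2 ((convex_convexHull ℝ _).openSegment_interior_self_subset_interior
    (hw hopen.2.1) (subset_convexHull ℝ _ hopen.2.2) hopen.1)

theorem exists_mem_openSegment_of_internal_insert (h : MoveAcross P z z' w₁ w₂) (hgp : GenPos P)
    (hz : Internal P z) (hS : S ⊆ P.erase z) (hx : x ∈ P.erase z) (hxS : x ∉ S)
    (hxz' : Internal (insert z' S) x) (hxz : ¬ Internal (insert z S) x) :
    ∃ p ∈ segment ℝ z z', ∃ y ∈ S, ({x, y} : Set ℂ) = {w₁, w₂} ∧ x ∈ openSegment ℝ p y := by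
  rw [Internal, Finset.coe_insert] at hxz hxz'
  obtain ⟨p, hp, hxp, hxpi⟩ :=
    exists_mem_segment_mem_convexHull_insert_notMem_interior S.finite_toSet hxz hxz'
  obtain ⟨u, hu, v, hv, hxuv⟩ := exists_mem_segment_of_notMem_interior_convexHull
    Complex.finrank_real_complex.le hxp hxpi
  have hpx : p ≠ x := fun e => h.notMem_erase_of_mem_segment hz hp (e ▸ hx)
  have hne : ∀ y ∈ S, x ≠ y := fun y hy e => hxS (e ▸ hy)
  have huv : u ≠ v := by
    rintro rfl
    obtain rfl : x = u := by simpa using hxuv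
    exact hu.elim hpx.symm hxS
  have of_mem_segment (y : ℂ) (hy : y ∈ S) (hxpy : x ∈ segment ℝ p y) :
      ∃ p ∈ segment ℝ z z', ∃ y ∈ S, ({x, y} : Set ℂ) = {w₁, w₂} ∧ x ∈ openSegment ℝ p y := by
    refine ⟨p, hp, y, hy, h.pair_eq_of_mem_lineThrough hx (hS hy) (hne y hy) hp ?_,
      mem_openSegment_of_ne_left_right hpx (hne y hy).symm hxpy⟩
    rw [lineThrough, Set.pair_comm]
    exact (mem_segment_iff_wbtw.1 hxpy).left_mem_affineSpan_of_right_ne (hne y hy).symm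
  rcases hu with rfl | hu
  · exact of_mem_segment v (hv.resolve_left huv.symm) hxuv
  rcases hv with rfl | hv
  · exact of_mem_segment u hu (segment_symm ℝ u v ▸ hxuv)
  have mem_of_mem_S {y : ℂ} (hy : y ∈ S) : y ∈ P := Finset.mem_of_mem_erase (hS hy)
  exact absurd (mem_segment_iff_wbtw.1 hxuv).collinear
    (hgp u (mem_of_mem_S hu) x (Finset.mem_of_mem_erase hx) v (mem_of_mem_S hv)
      (hne u hu).symm huv (hne v hv))

theorem internal_moved (h : MoveAcross P z z' w₁ w₂) (hz : Internal P z) (hw : Internal P w₁) :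
    Internal P z' :=
  (internal_erase_iff hz).1 <| h.internal_of_internal_of_mem_segment hz subset_rfl
    (fun _ => (internal_erase_iff hz).2 hw) (left_mem_segment ℝ z z') (right_mem_segment ℝ z z')
    ((internal_erase_iff hz).2 hz)

theorem internal_of_internal_moved (h : MoveAcross P z z' w₁ w₂) (hΔ : PropertyDelta P k)
    (hz : Internal P z) (hw : Internal P w₁) (hA : IsTight P k A) (hzA : z ∉ A)
    (hz'A : Internal A z') : Internal A z := by
  have hAz : A ⊆ P.erase z := Finset.subset_erase.2 ⟨hA.1, hzA⟩
  by_cases hw₁A : w₁ ∈ A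
  · obtain ⟨t, ht, hcard, hw₁t⟩ := hz'A.exists_card_le_two_union ((internal_erase_iff hz).2 hw)
    have hzt : Internal (A ∪ t) z :=
      h.internal_of_internal_of_mem_segment hz (Finset.union_subset hAz ht) (fun _ => hw₁t)
        (right_mem_segment ℝ z z') (left_mem_segment ℝ z z') (hz'A.mono Finset.subset_union_left)
    exact hA.internal_of_internal_union hΔ (ht.trans (Finset.erase_subset z P)) hcard hw₁A hw₁t
      h.mem h.ne_left.symm hzt
  · exact h.internal_of_internal_of_mem_segment hz hAz (absurd · hw₁A)
      (right_mem_segment ℝ z z') (left_mem_segment ℝ z z') hz'A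

theorem internal_insert_of_mem_openSegment (h : MoveAcross P z z' w₁ w₂)
    (hΔ : PropertyDelta P k) (hz : Internal P z) (hw : Internal P w₁)
    (hA : IsTight P k (insert z S)) (hw₁S : w₁ ∉ S) (hw₂S : w₂ ∈ S) {p : ℂ}
    (hp : p ∈ segment ℝ z z') (hw₁p : w₁ ∈ openSegment ℝ p w₂) : Internal (insert z S) w₁ := by
  have hzw₁ : z ≠ w₁ := h.ne_left
  have hzA : z ∈ insert z S := Finset.mem_insert_self z S
  obtain ⟨q, hq⟩ := hA.exists_internal hΔ ⟨z, hzA⟩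
  obtain ⟨t, ht, hcard, hzt⟩ := hq.exists_card_le_two_union ((internal_erase_iff hw).2 hz)
  have htP : t ⊆ P := ht.trans (Finset.erase_subset w₁ P)
  set T := insert z S ∪ t with hT
  have hTP : T ⊆ P := Finset.union_subset hA.1 htP
  have hw₁T : w₁ ∉ T := by
    simp only [hT, Finset.mem_union, Finset.mem_insert, not_or]
    exact ⟨⟨hzw₁.symm, hw₁S⟩, fun hw₁t => Finset.notMem_erase w₁ P (ht hw₁t)⟩
  have hpT : Internal T p := (internal_erase_iff hzt).1 <|
    h.internal_of_internal_of_mem_segment hz (Finset.erase_subset_erase z hTP)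
      (fun hw₁ => absurd (Finset.mem_of_mem_erase hw₁) hw₁T) (left_mem_segment ℝ z z') hp
      ((internal_erase_iff hzt).2 hzt)
  have hw₂T : w₂ ∈ T := Finset.mem_union_left t (Finset.mem_insert_of_mem hw₂S)
  have hw₁T' : Internal T w₁ :=
    (convex_convexHull ℝ _).openSegment_interior_self_subset_interior hpT
      (subset_convexHull ℝ _ hw₂T) hw₁p
  exact hA.internal_of_internal_union hΔ htP hcard hzA hzt h.left_mem hzw₁ hw₁T'

end MoveAcross

theorem mem_movedConfig : x ∈ movedConfig P z z' ↔ x = z' ∨ x ∈ P.erase z :=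
  Finset.mem_insert

theorem intPts_movedConfig_subset :
    intPts (movedConfig P z z') A ⊆ insert z' ((intPts P A).erase z) := fun x hx => by
  obtain ⟨hxQ, hxA⟩ := mem_intPts.1 hx
  refine Finset.mem_insert.2 ((mem_movedConfig.1 hxQ).imp_right fun hxP => ?_)
  rw [Finset.mem_erase] at hxP ⊢
  exact ⟨hxP.1, mem_intPts.2 ⟨hxP.2, hxA⟩⟩

theorem ConvexSubset.mem_erase_of_mem_intPts (hA : ConvexSubset (movedConfig P z z') A)
    (hz'A : z' ∈ A) (hx : x ∈ intPts (movedConfig P z z') A) : x ∈ P.erase z ∧ x ∉ A := by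
  obtain ⟨hxQ, hxA⟩ := mem_intPts.1 hx
  have hxA' : x ∉ A := fun hxA' => hA.2 x hxA' hxA
  exact ⟨(mem_movedConfig.1 hxQ).resolve_left fun e => hxA' (e ▸ hz'A), hxA'⟩

namespace MoveAcross

theorem exists_mem_openSegment_of_mem_intPts_sdiff (h : MoveAcross P z z' w₁ w₂) (hgp : GenPos P)
    (hz : Internal P z) (hS : S ⊆ P.erase z)
    (hA : ConvexSubset (movedConfig P z z') (insert z' S))
    (hx : x ∈ intPts (movedConfig P z z') (insert z' S) \ intPts P (insert z S)) :
    ∃ p ∈ segment ℝ z z', ∃ y ∈ S, ({x, y} : Set ℂ) = {w₁, w₂} ∧ x ∉ S ∧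
      x ∈ openSegment ℝ p y := by
  obtain ⟨hxQ, hxP⟩ := Finset.mem_sdiff.1 hx
  obtain ⟨hxe, hxA⟩ := hA.mem_erase_of_mem_intPts (Finset.mem_insert_self z' S) hxQ
  have hxS : x ∉ S := fun hxS => hxA (Finset.mem_insert_of_mem hxS)
  obtain ⟨p, hp, y, hy, hxy, hxpy⟩ := h.exists_mem_openSegment_of_internal_insert hgp hz hS hxe hxS
    (mem_intPts.1 hxQ).2 fun hxi => hxP (mem_intPts.2 ⟨Finset.mem_of_mem_erase hxe, hxi⟩)
  exact ⟨p, hp, y, hy, hxy, hxS, hxpy⟩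

theorem card_intPts_insert_sdiff_le_one (h : MoveAcross P z z' w₁ w₂) (hgp : GenPos P)
    (hz : Internal P z) (hS : S ⊆ P.erase z)
    (hA : ConvexSubset (movedConfig P z z') (insert z' S)) :
    (intPts (movedConfig P z z') (insert z' S) \ intPts P (insert z S)).card ≤ 1 := by
  refine Finset.card_le_one.2 fun x₁ hx₁ x₂ hx₂ => ?_
  obtain ⟨-, -, y₁, hy₁, hxy₁, -, -⟩ :=
    h.exists_mem_openSegment_of_mem_intPts_sdiff hgp hz hS hA hx₁
  obtain ⟨-, -, y₂, -, hxy₂, hx₂S, -⟩ :=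
    h.exists_mem_openSegment_of_mem_intPts_sdiff hgp hz hS hA hx₂
  have hx₂mem : x₂ ∈ ({x₁, y₁} : Set ℂ) := by
    rw [hxy₁, ← hxy₂]
    exact Set.mem_insert x₂ _
  exact (hx₂mem.resolve_right fun e => hx₂S (e ▸ hy₁)).symm

theorem intPts_insert_subset (h : MoveAcross P z z' w₁ w₂) (hgp : GenPos P)
    (hΔ : PropertyDelta P k) (hz : Internal P z) (hw : Internal P w₁) (hS : S ⊆ P.erase z)
    (hA : ConvexSubset (movedConfig P z z') (insert z' S)) (htight : IsTight P k (insert z S)) :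
    intPts (movedConfig P z z') (insert z' S) ⊆ intPts P (insert z S) := fun x hxQ => by
  by_contra hxP
  obtain ⟨p, hp, y, hy, hxy, hxS, hxpy⟩ := h.exists_mem_openSegment_of_mem_intPts_sdiff hgp hz hS hA
    (Finset.mem_sdiff.2 ⟨hxQ, hxP⟩)
  have hxmem : x ∈ P := Finset.mem_of_mem_erase
    (hA.mem_erase_of_mem_intPts (Finset.mem_insert_self z' S) hxQ).1
  have hxint : Internal P x := by
    have hsub : ((insert z' S : Finset ℂ) : Set ℂ) ⊆ convexHull ℝ (P : Set ℂ) := by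
      rw [Finset.coe_insert]
      exact Set.insert_subset (interior_subset (h.internal_moved hz hw))
        ((Finset.coe_subset.2 (hS.trans (Finset.erase_subset z P))).trans (subset_convexHull ℝ _))
    exact interior_mono (convexHull_min hsub (convex_convexHull ℝ _)) (mem_intPts.1 hxQ).2
  refine hxP (mem_intPts.2 ⟨hxmem, ?_⟩)
  rcases Set.pair_eq_pair_iff.1 hxy with ⟨rfl, rfl⟩ | ⟨rfl, rfl⟩
  · exact h.internal_insert_of_mem_openSegment hΔ hz hxint htight hxS hy hp hxpy
  · exact h.symm.internal_insert_of_mem_openSegment hΔ hz hxint htight hxS hy hp hxpy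

theorem card_intPts_movedConfig_le_of_notMem (h : MoveAcross P z z' w₁ w₂)
    (hΔ : PropertyDelta P k) (hz : Internal P z) (hw : Internal P w₁)
    (hA : ConvexSubset (movedConfig P z z') A) (hz'A : z' ∉ A) :
    ((intPts (movedConfig P z z') A).card : ℤ) ≤ A.card + k - 3 := by
  have hAz : A ⊆ P.erase z := (Finset.subset_insert_iff_of_notMem hz'A).1 hA.1
  have hAP : A ⊆ P := hAz.trans (Finset.erase_subset z P)
  have hbound : ((intPts P A).card : ℤ) ≤ A.card + k - 3 := hΔ A ⟨hAP, hA.2⟩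
  by_contra! hlt
  have hz'i : Internal A z' := by
    by_contra hz'i
    have hsub : intPts (movedConfig P z z') A ⊆ (intPts P A).erase z :=
      (Finset.subset_insert_iff_of_notMem fun hmem => hz'i (mem_intPts.1 hmem).2).1
        intPts_movedConfig_subset
    have := Finset.card_le_card (hsub.trans (Finset.erase_subset z _))
    omega
  have hcard : (intPts (movedConfig P z z') A).card ≤ ((intPts P A).erase z).card + 1 :=
    (Finset.card_le_card intPts_movedConfig_subset).trans (Finset.card_insert_le _ _)
  have htight : IsTight P k A := ⟨hAP, by
    have : ((intPts P A).erase z).card ≤ (intPts P A).card := Finset.card_erase_le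
    omega⟩
  have hzA : z ∉ A := fun hzA => Finset.notMem_erase z P (hAz hzA)
  have hzi : Internal A z := h.internal_of_internal_moved hΔ hz hw htight hzA hz'i
  have := Finset.card_erase_add_one (mem_intPts.2 ⟨h.mem, hzi⟩)
  omega

theorem card_intPts_movedConfig_le_of_mem (h : MoveAcross P z z' w₁ w₂) (hgp : GenPos P)
    (hΔ : PropertyDelta P k) (hz : Internal P z) (hw : Internal P w₁)
    (hA : ConvexSubset (movedConfig P z z') A) (hz'A : z' ∈ A) :
    ((intPts (movedConfig P z z') A).card : ℤ) ≤ A.card + k - 3 := by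
  obtain ⟨S, hz'S, rfl⟩ : ∃ S, z' ∉ S ∧ insert z' S = A :=
    ⟨A.erase z', Finset.notMem_erase z' A, Finset.insert_erase hz'A⟩
  have hS : S ⊆ P.erase z :=
    (Finset.insert_subset_insert_iff hz'S).1 hA.1
  have hSP : insert z S ⊆ P := Finset.insert_subset h.mem (hS.trans (Finset.erase_subset z P))
  have hzS : z ∉ S := fun hzS => Finset.notMem_erase z P (hS hzS)
  have hcard : (insert z S).card = (insert z' S).card := by
    rw [Finset.card_insert_of_notMem hzS, Finset.card_insert_of_notMem hz'S]
  have hbound := hΔ.card_intPts_add_card_intPts_self_le hSP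
  have hgain : (intPts (movedConfig P z z') (insert z' S)).card ≤
      1 + (intPts P (insert z S)).card :=
    Finset.card_le_card_sdiff_add_card.trans
      (Nat.add_le_add_right (h.card_intPts_insert_sdiff_le_one hgp hz hS hA) _)
  by_contra! hlt
  have htight : IsTight P k (insert z S) := ⟨hSP, by omega⟩
  have := Finset.card_le_card (h.intPts_insert_subset hgp hΔ hz hw hS hA htight)
  omega

end MoveAcross

end Planar

/-- Moving an internal point across a line of the arrangement `𝒜^z` having at least
one internal endpoint preserves Property `Δ_k`. -/
theorem propertyDelta_of_move_internal_endpoint (k : ℕ)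
    (P : Finset ℂ) (hgp : GenPos P) (hΔ : PropertyDelta P k)
    (z z' w₁ w₂ : ℂ) (hmove : MoveAcross P z z' w₁ w₂)
    (hz : Internal P z) (hw : Internal P w₁ ∨ Internal P w₂) :
    PropertyDelta (movedConfig P z z') k := by
  have of_internal {w₁ w₂ : ℂ} (hmove : MoveAcross P z z' w₁ w₂) (hw₁ : Internal P w₁) :
      PropertyDelta (movedConfig P z z') k := fun A hA => by
    by_cases hz'A : z' ∈ A
    · exact hmove.card_intPts_movedConfig_le_of_mem hgp hΔ hz hw₁ hA hz'A
    · exact hmove.card_intPts_movedConfig_le_of_notMem hΔ hz hw₁ hA hz'A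
  exact hw.elim (of_internal hmove) (of_internal hmove.symm)
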